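/- For all η,η' ∈ ℂ and all w,x,y,z ∈ ℤ/3ℤ with y ≠ z, one has M^{wx/yz}[η,η'] · J² = M^{wx/(y+1)(z+1)}[η,η']. -/

import Mathlib

noncomputable def ω : ℂ := Complex.exp (2 * Real.pi * Complex.I / 3)

def J : Matrix (Fin 3) (Fin 3) ℂ := !![0,1,0; 0,0,1; 1,0,0]

noncomputable def W : Matrix (Fin 3) (Fin 3) ℂ := !![1,1,1; 1,ω,ω^2; 1,ω^2,ω]

/-- generalized cevian operator `S[η,η'] = W ⬝ diag(1,η',η) ⬝ W⁻¹` -/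
noncomputable def S (η η' : ℂ) : Matrix (Fin 3) (Fin 3) ℂ :=
  W * Matrix.diagonal ![1, η', η] * W⁻¹

/-- `ω^k` for `k : ZMod 3` (well defined since `ω^3 = 1`). -/
noncomputable def ωz (k : ZMod 3) : ℂ := ω ^ k.val

/-- `J^k` for `k : ZMod 3` (well defined since `J^3 = 1`). -/
def Jz (k : ZMod 3) : Matrix (Fin 3) (Fin 3) ℂ := J ^ k.val

/-- generalized median operator `M^{wx/yz}[η,η']` -/
noncomputable def M (η η' : ℂ) (w x y z : ZMod 3) : Matrix (Fin 3) (Fin 3) ℂ :=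
  S ((η * ωz (-x) - ωz (-w)) / (ωz (-z) - ωz (-y)))
    ((η' * ωz x - ωz w) / (ωz z - ωz y))

/-!
`W` is the Vandermonde matrix of the cube roots of unity, and its columns are eigenvectors of `J`,
with eigenvalues `1, ω, ω⁻¹`. Thus `J` is itself the cevian operator `S ω⁻¹ ω`. Cevian operators
are simultaneously diagonalized by `W`, so they multiply parameterwise, and right multiplication by
`J ^ 2` scales the two parameters by `ω` and `ω⁻¹`. Raising `y` and `z` by one divides the two
denominators in `M` by `ω` and `ω⁻¹` respectively, which scales the parameters in the same way.
-/

theorem isPrimitiveRoot_ω : IsPrimitiveRoot ω 3 := by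
  simpa [ω] using Complex.isPrimitiveRoot_exp 3 (by norm_num)

theorem ω_pow_three : ω ^ 3 = 1 := isPrimitiveRoot_ω.pow_eq_one

theorem ω_inv : ω⁻¹ = ω ^ 2 :=
  inv_eq_of_mul_eq_one_right (by rw [← pow_succ', ω_pow_three])

theorem ωz_one : ωz 1 = ω := by
  simp [ωz, ZMod.val_one]

theorem ωz_add (j k : ZMod 3) : ωz (j + k) = ωz j * ωz k := by
  rw [ωz, ωz, ωz, ← pow_add, ZMod.val_add, ← pow_eq_pow_mod _ ω_pow_three]

theorem ωz_neg (k : ZMod 3) : ωz (-k) = (ωz k)⁻¹ :=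
  eq_inv_of_mul_eq_one_left (by rw [← ωz_add, neg_add_cancel, ωz, ZMod.val_zero, pow_zero])

theorem W_eq_vandermonde : W = Matrix.vandermonde fun i : Fin 3 ↦ ω ^ (i : ℕ) := by
  have ω_pow_four : (ω ^ 2) ^ 2 = ω := by rw [← pow_mul, pow_succ, ω_pow_three, one_mul]
  ext i j
  fin_cases i <;> fin_cases j <;> simp [W, Matrix.vandermonde_apply, ω_pow_four]

theorem isUnit_det_W : IsUnit W.det := by
  rw [isUnit_iff_ne_zero, W_eq_vandermonde, Matrix.det_vandermonde_ne_zero_iff]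
  exact fun i j h ↦ Fin.ext (isPrimitiveRoot_ω.pow_inj i.isLt j.isLt h)

theorem J_mul_W : J * W = W * Matrix.diagonal ![1, ω, ω⁻¹] := by
  rw [ω_inv]
  ext i j
  fin_cases i <;> fin_cases j <;>
    simp [J, W, Matrix.mul_apply, Fin.sum_univ_three] <;>
    grind [ω_pow_three]

theorem J_eq_S : J = S ω⁻¹ ω := by
  rw [S, ← J_mul_W, Matrix.mul_nonsing_inv_cancel_right _ _ isUnit_det_W]

theorem S_mul_S (η η' θ θ' : ℂ) : S η η' * S θ θ' = S (η * θ) (η' * θ') := by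
  have diagonal_mul : Matrix.diagonal ![1, η', η] * Matrix.diagonal ![1, θ', θ] =
      Matrix.diagonal ![1, η' * θ', η * θ] := by
    rw [Matrix.diagonal_mul_diagonal']
    simp [Fin.forall_fin_succ]
  simp only [S, ← diagonal_mul, Matrix.mul_assoc,
    Matrix.nonsing_inv_mul_cancel_left _ _ isUnit_det_W]

theorem J_sq_eq_S : J ^ 2 = S ω ω⁻¹ := by
  have ω_inv_mul_ω_inv : ω⁻¹ * ω⁻¹ = ω := by rw [← mul_inv, ← pow_two, ← ω_inv, inv_inv]
  rw [pow_two, J_eq_S, S_mul_S, ω_inv_mul_ω_inv, ← pow_two, ω_inv]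

theorem median_mul_J_sq (η η' : ℂ) (w x y z : ZMod 3) (hyz : y ≠ z) :
    M η η' w x y z * J ^ 2 = M η η' w x (y + 1) (z + 1) := by
  have denom_shift : ωz (z + 1) - ωz (y + 1) = (ωz z - ωz y) * ω := by
    rw [ωz_add, ωz_add, ωz_one, sub_mul]
  have denom_neg_shift : ωz (-(z + 1)) - ωz (-(y + 1)) = (ωz (-z) - ωz (-y)) * ω⁻¹ := by
    rw [neg_add, neg_add, ωz_add, ωz_add, ωz_neg 1, ωz_one, sub_mul]
  rw [J_sq_eq_S, M, S_mul_S, M, denom_shift, denom_neg_shift, ← div_div, ← div_div, div_inv_eq_mul,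
    div_eq_mul_inv _ ω]
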